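/- arXiv:0711.3159 — 2 statements merged into one kernel-verified Lean document; each statement's English description precedes it below -/
import Mathlib

section
/- Suppose the real numbers 1, α, β are rationally independent. Then for every polynomial p with real coefficients of degree at most 2, one has lim_{N→∞} (1/N)·Σ_{n=1}^N e(⌊n·α⌋·n·β + p(n)) = 0. -/
open Filter MeasureTheory

/-- `e(x) = exp(2πix)`. -/
noncomputable def eFun (x : ℝ) : ℂ := Complex.exp (2 * Real.pi * Complex.I * x)

open Finset ComplexConjugate

/-- The Cesàro means of `u` tend to zero. -/
def MeanZero (u : ℕ → ℂ) : Prop :=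
  Tendsto (fun N : ℕ => (N : ℂ)⁻¹ * ∑ n ∈ range N, u n) atTop (nhds 0)

theorem meanZero_iff {u : ℕ → ℂ} :
    MeanZero u ↔ ∀ ε : ℝ, 0 < ε → ∀ᶠ N : ℕ in atTop, ‖∑ n ∈ range N, u n‖ ≤ ε * N := by
  unfold MeanZero
  have key : ∀ N : ℕ, 0 < N → ∀ ε : ℝ,
      ‖(N : ℂ)⁻¹ * ∑ n ∈ range N, u n‖ ≤ ε ↔ ‖∑ n ∈ range N, u n‖ ≤ ε * N := by
    intro N hN ε
    have : (0 : ℝ) < N := by exact_mod_cast hN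
    rw [norm_mul, norm_inv, Complex.norm_natCast, inv_mul_le_iff₀ this, mul_comm]
  rw [Metric.tendsto_nhds]
  constructor
  · intro h ε hε
    filter_upwards [h ε hε, eventually_gt_atTop 0] with N h1 h2
    rw [dist_zero_right] at h1
    exact (key N h2 ε).1 h1.le
  · intro h ε hε
    filter_upwards [h (ε / 2) (half_pos hε), eventually_gt_atTop 0] with N h1 h2
    rw [dist_zero_right]
    exact ((key N h2 _).2 h1).trans_lt (half_lt_self hε)

theorem MeanZero.add {u v : ℕ → ℂ} (hu : MeanZero u) (hv : MeanZero v) :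
    MeanZero (fun n => u n + v n) := by
  unfold MeanZero at *
  simpa [sum_add_distrib, mul_add] using Tendsto.add hu hv

theorem MeanZero.const_mul {u : ℕ → ℂ} (hu : MeanZero u) (c : ℂ) :
    MeanZero (fun n => c * u n) := by
  unfold MeanZero at *
  simpa [← mul_sum, mul_left_comm] using Tendsto.const_mul c hu

theorem MeanZero.conj {u : ℕ → ℂ} (hu : MeanZero u) : MeanZero (fun n => conj (u n)) := by
  rw [meanZero_iff] at *
  simpa only [← map_sum, RCLike.norm_conj] using hu

theorem MeanZero.sum {ι : Type*} (s : Finset ι) {u : ι → ℕ → ℂ}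
    (hu : ∀ i ∈ s, MeanZero (u i)) : MeanZero (fun n => ∑ i ∈ s, u i n) := by
  classical
  induction s using Finset.induction_on with
  | empty => simp [MeanZero]
  | insert a s ha ih =>
    simp only [sum_insert ha]
    exact (hu a (mem_insert_self a s)).add (ih fun i hi => hu i (mem_insert_of_mem hi))

theorem meanZero_of_bounded_sum {u : ℕ → ℂ} (C : ℝ) (hC : ∀ N, ‖∑ n ∈ range N, u n‖ ≤ C) :
    MeanZero u := by
  rw [meanZero_iff]
  intro ε hε
  filter_upwards [(tendsto_natCast_atTop_atTop (R := ℝ)).eventually_ge_atTop (C / ε)] with N hN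
  rw [div_le_iff₀ hε] at hN
  linarith [hC N]

theorem meanZero_of_approx {u : ℕ → ℂ}
    (h : ∀ ε : ℝ, 0 < ε → ∃ v, MeanZero v ∧
      ∀ᶠ N : ℕ in atTop, ∑ n ∈ range N, ‖u n - v n‖ ≤ ε * N) : MeanZero u := by
  rw [meanZero_iff]
  intro ε hε
  obtain ⟨v, hv, huv⟩ := h (ε / 2) (half_pos hε)
  filter_upwards [meanZero_iff.1 hv (ε / 2) (half_pos hε), huv] with N h1 h2
  have h3 : ∑ n ∈ range N, u n = ∑ n ∈ range N, (u n - v n) + ∑ n ∈ range N, v n := by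
    simp
  rw [h3]
  have := norm_add_le (∑ n ∈ range N, (u n - v n)) (∑ n ∈ range N, v n)
  have := norm_sum_le (range N) (fun n => u n - v n)
  linarith

theorem meanZero_shift_sub {u : ℕ → ℂ} (hu : ∀ n, ‖u n‖ ≤ 1) (k : ℕ) :
    MeanZero (fun n => u (n + k) - u n) := by
  refine meanZero_of_bounded_sum (2 * k) fun N => ?_
  have h : ∑ n ∈ range N, (u (n + k) - u n)
      = ∑ n ∈ range k, u (N + n) - ∑ n ∈ range k, u n := by
    have h1 := sum_range_add u N k
    have h2 := sum_range_add u k N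
    rw [add_comm k N] at h2
    simp only [add_comm k] at h2
    rw [sum_sub_distrib]
    linear_combination h1 - h2
  have bd : ∀ v : ℕ → ℂ, (∀ n, ‖v n‖ ≤ 1) → ‖∑ n ∈ range k, v n‖ ≤ k := fun v hv => by
    simpa using norm_sum_le_of_le (range k) (fun n _ => hv n)
  rw [h]
  have := norm_sub_le (∑ n ∈ range k, u (N + n)) (∑ n ∈ range k, u n)
  linarith [bd u hu, bd (fun n => u (N + n)) fun n => hu _]

theorem MeanZero.shift {u : ℕ → ℂ} (hu : ∀ n, ‖u n‖ ≤ 1) (h : MeanZero u) (k : ℕ) :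
    MeanZero (fun n => u (n + k)) := by
  simpa using (meanZero_shift_sub hu k).add h

/-- **Van der Corput's lemma**: a bounded sequence has vanishing mean as soon as
all its correlations with sufficiently large shifts do. -/
theorem meanZero_of_correlations {u : ℕ → ℂ} (hu : ∀ n, ‖u n‖ ≤ 1) (M : ℕ)
    (hM : ∀ h, M ≤ h → MeanZero (fun n => u (n + h) * conj (u n))) : MeanZero u := by
  have corr : ∀ j k : ℕ, j ≠ k →
      MeanZero (fun n => u (n + j * M) * conj (u (n + k * M))) := by
    have lt : ∀ j k : ℕ, k < j →
        MeanZero (fun n => u (n + j * M) * conj (u (n + k * M))) := by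
      intro j k hjk
      obtain ⟨d, rfl⟩ := Nat.exists_eq_add_of_lt hjk
      have h1 := (hM ((d + 1) * M) (Nat.le_mul_of_pos_left M d.succ_pos)).shift
        (fun n => by
          rw [norm_mul, RCLike.norm_conj]
          exact mul_le_one₀ (hu _) (norm_nonneg _) (hu _)) (k * M)
      have e : ∀ n, n + (k + d + 1) * M = n + k * M + (d + 1) * M := fun n => by ring
      simpa only [e] using h1
    intro j k hjk
    rcases lt_or_gt_of_ne hjk with h | h
    · simpa [mul_comm] using (lt k j h).conj
    · exact lt j k h
  rw [meanZero_iff]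
  intro ε hε
  obtain ⟨K, hK⟩ := exists_nat_gt (3 / ε)
  have hK0 : (0 : ℝ) < K := lt_trans (by positivity) hK
  have hK1 : (1 : ℝ) ≤ K := by exact_mod_cast Nat.one_le_iff_ne_zero.2 (by rintro rfl; simp at hK0)
  set H := K ^ 2 with hH
  set w : ℕ → ℂ := fun n => ∑ j ∈ range H, u (n + j * M) with hw
  have off : MeanZero (fun n => ∑ q ∈ (range H).offDiag,
      u (n + q.1 * M) * conj (u (n + q.2 * M))) :=
    MeanZero.sum _ fun q hq => corr _ _ (mem_offDiag.1 hq).2.2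
  have hdiff : MeanZero (fun n => ∑ j ∈ range H, (u (n + j * M) - u n)) :=
    MeanZero.sum _ fun j _ => meanZero_shift_sub hu _
  have sq : ∀ n, ‖w n‖ ^ 2 ≤ H + (∑ q ∈ (range H).offDiag,
      u (n + q.1 * M) * conj (u (n + q.2 * M))).re := by
    intro n
    have h1 : ((‖w n‖ ^ 2 : ℝ) : ℂ) = ∑ q ∈ (range H).diag,
        u (n + q.1 * M) * conj (u (n + q.2 * M)) + ∑ q ∈ (range H).offDiag,
        u (n + q.1 * M) * conj (u (n + q.2 * M)) := by
      rw [← sum_union (disjoint_diag_offDiag _), diag_union_offDiag, sum_product]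
      push_cast
      rw [← Complex.mul_conj', hw, map_sum, sum_mul_sum]
    have h2 := congrArg Complex.re h1
    rw [Complex.ofReal_re, Complex.add_re] at h2
    rw [h2]
    gcongr
    rw [sum_diag, Complex.re_sum]
    calc _ ≤ ∑ _j ∈ range H, (1 : ℝ) := sum_le_sum fun j _ => by
          rw [Complex.mul_conj', ← Complex.ofReal_pow, Complex.ofReal_re]
          exact pow_le_one₀ (norm_nonneg _) (hu _)
      _ = H := by simp
  filter_upwards [meanZero_iff.1 off 1 one_pos, meanZero_iff.1 hdiff 1 one_pos] with N h1 h2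
  have hwN : ‖∑ n ∈ range N, w n‖ ≤ (K + 1) * N := by
    refine abs_le_of_sq_le_sq' ?_ (by positivity) |>.2
    calc ‖∑ n ∈ range N, w n‖ ^ 2 ≤ (∑ n ∈ range N, ‖w n‖) ^ 2 := by
          gcongr; exact norm_sum_le _ _
      _ ≤ N * ∑ n ∈ range N, ‖w n‖ ^ 2 := by
          simpa using sq_sum_le_card_mul_sum_sq (s := range N) (f := fun n => ‖w n‖)
      _ ≤ N * (H * N + 1 * N) := by
          gcongr
          refine (sum_le_sum fun n _ => sq n).trans ?_
          rw [sum_add_distrib, ← Complex.re_sum]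
          have := (Complex.re_le_norm _).trans h1
          simp only [sum_const, card_range, nsmul_eq_mul]
          linarith
      _ ≤ ((K + 1) * N) ^ 2 := by
          rw [hH]; push_cast
          nlinarith [mul_nonneg hK0.le (sq_nonneg (N : ℝ))]
  have h3 : (H : ℂ) * ∑ n ∈ range N, u n = ∑ n ∈ range N, w n
      - ∑ n ∈ range N, ∑ j ∈ range H, (u (n + j * M) - u n) := by
    simp [hw, sum_sub_distrib, mul_sum]
  have h4 : (H : ℝ) * ‖∑ n ∈ range N, u n‖ ≤ (K + 2) * N := by
    rw [← Complex.norm_natCast, ← norm_mul, h3]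
    refine (norm_sub_le _ _).trans ?_
    linarith
  rw [hH] at h4
  push_cast at h4
  rw [div_lt_iff₀ hε] at hK
  have h5 : (K + 2) * (N : ℝ) ≤ K ^ 2 * (ε * N) := by
    have : (K + 2 : ℝ) ≤ K ^ 2 * ε := by nlinarith
    nlinarith [N.cast_nonneg (α := ℝ)]
  exact le_of_mul_le_mul_left (h4.trans h5) (by positivity)

theorem eFun_add (x y : ℝ) : eFun (x + y) = eFun x * eFun y := by
  simp [eFun, mul_add, Complex.exp_add]

theorem norm_eFun (x : ℝ) : ‖eFun x‖ = 1 := by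
  have : eFun x = Complex.exp ((2 * Real.pi * x : ℝ) * Complex.I) := by
    unfold eFun; congr 1; push_cast; ring
  rw [this, Complex.norm_exp_ofReal_mul_I]

theorem conj_eFun (x : ℝ) : conj (eFun x) = eFun (-x) := by
  simp [eFun, ← Complex.exp_conj, Complex.conj_ofNat]

theorem eFun_intCast (k : ℤ) : eFun k = 1 := by
  rw [eFun, Complex.exp_eq_one_iff]
  exact ⟨k, by push_cast; ring⟩

theorem eFun_eq_one_iff {x : ℝ} : eFun x = 1 ↔ ∃ k : ℤ, x = k := by
  refine ⟨fun h => ?_, fun ⟨k, hk⟩ => hk ▸ eFun_intCast k⟩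
  obtain ⟨k, hk⟩ := Complex.exp_eq_one_iff.1 h
  refine ⟨k, ?_⟩
  have h2 : (2 * Real.pi * Complex.I : ℂ) ≠ 0 := Complex.two_pi_I_ne_zero
  rw [mul_comm (k : ℂ)] at hk
  exact_mod_cast mul_left_cancel₀ h2 hk

theorem eFun_natCast_mul (n : ℕ) (x : ℝ) : eFun (n * x) = eFun x ^ n := by
  rw [eFun, eFun, ← Complex.exp_nat_mul]
  congr 1; push_cast; ring

theorem continuous_eFun : Continuous eFun := by
  unfold eFun; fun_prop

theorem meanZero_eFun {x : ℝ} (hx : ∀ k : ℤ, x ≠ k) : MeanZero (fun n => eFun (n * x)) := by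
  have h1 : eFun x ≠ 1 := fun h => by
    obtain ⟨k, hk⟩ := eFun_eq_one_iff.1 h
    exact hx k hk
  refine meanZero_of_bounded_sum (2 / ‖eFun x - 1‖) fun N => ?_
  simp only [eFun_natCast_mul]
  rw [geom_sum_eq h1, norm_div]
  gcongr
  refine (norm_sub_le _ _).trans ?_
  rw [norm_pow, norm_eFun]
  norm_num

theorem meanZero_eFun_mul_continuous {α θ : ℝ} (hθ : ∀ k l : ℤ, θ + k * α ≠ l)
    (F : C(UnitAddCircle, ℂ)) :
    MeanZero (fun n => eFun (n * θ) * F ((n * α : ℝ) : UnitAddCircle)) := by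
  have hspan : ∀ G ∈ Submodule.span ℂ (Set.range (@fourier 1)),
      MeanZero (fun n => eFun (n * θ) * G ((n * α : ℝ) : UnitAddCircle)) := by
    intro G hG
    induction hG using Submodule.span_induction with
    | mem G hG =>
      obtain ⟨k, rfl⟩ := hG
      convert meanZero_eFun (hθ k) using 2 with n
      rw [fourier_coe_apply, mul_add, eFun_add]
      congr 1
      unfold eFun
      congr 1; push_cast; ring
    | zero => simp [MeanZero]
    | add G G' _ _ h h' => simpa [mul_add] using h.add h'
    | smul c G _ h => simpa [mul_left_comm] using h.const_mul c
  refine meanZero_of_approx fun ε hε => ?_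
  have hF : F ∈ closure (Submodule.span ℂ (Set.range (@fourier 1)) : Set C(UnitAddCircle, ℂ)) := by
    rw [← Submodule.topologicalClosure_coe, span_fourier_closure_eq_top]
    trivial
  obtain ⟨G, hG, hFG⟩ := Metric.mem_closure_iff.1 hF ε hε
  refine ⟨_, hspan G hG, Eventually.of_forall fun N => ?_⟩
  calc _ ≤ ∑ _n ∈ range N, ε := sum_le_sum fun n _ => by
        rw [← mul_sub, norm_mul, norm_eFun, one_mul, ← dist_eq_norm]
        exact (ContinuousMap.dist_apply_le_dist _).trans hFG.le
    _ = ε * N := by simp [mul_comm]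

/-- Multiples of an irrational number visit short arcs rarely. -/
theorem exists_card_near_le {α : ℝ} (hα : Irrational α) {K : ℕ} (hK : 0 < K) :
    ∃ ε : ℝ, 0 < ε ∧ ∀ (x : UnitAddCircle) (N : ℕ),
      ((range N).filter fun n : ℕ => ‖((n * α : ℝ) : UnitAddCircle) - x‖ < ε).card ≤ N / K + 1 := by
  have hpos : ∀ m : ℕ, 0 < m → 0 < ‖((m * α : ℝ) : UnitAddCircle)‖ := by
    intro m hm
    rw [norm_pos_iff, Ne, AddCircle.coe_eq_zero_iff]
    rintro ⟨k, hk⟩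
    refine (hα.natCast_mul hm.ne').ne_int k ?_
    rw [← hk]; simp
  have hδ : ∃ δ : ℝ, 0 < δ ∧ ∀ m ∈ Finset.Ico 1 K, δ ≤ ‖((m * α : ℝ) : UnitAddCircle)‖ := by
    rcases (Finset.Ico 1 K).eq_empty_or_nonempty with h | h
    · exact ⟨1, one_pos, by simp [h]⟩
    · obtain ⟨m, hm, hmin⟩ := exists_min_image _ (fun m : ℕ => ‖((m * α : ℝ) : UnitAddCircle)‖) h
      exact ⟨_, hpos m (mem_Ico.1 hm).1, hmin⟩
  obtain ⟨δ, hδ, hmin⟩ := hδ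
  refine ⟨δ / 2, half_pos hδ, fun x N => ?_⟩
  rw [← card_range (N / K + 1)]
  refine card_le_card_of_injOn (· / K) (fun n hn => ?_) ?_
  · simp only [coe_filter, mem_range, Set.mem_ofPred_eq] at hn
    simpa using Nat.lt_succ_of_le (Nat.div_le_div_right hn.1.le)
  · have main : ∀ a b : ℕ, ‖((a * α : ℝ) : UnitAddCircle) - x‖ < δ / 2 →
        ‖((b * α : ℝ) : UnitAddCircle) - x‖ < δ / 2 → a / K = b / K → ¬ a < b := by
      intro a b ha hb hab hlt
      have hm : b - a ∈ Finset.Ico 1 K := by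
        have h1 := Nat.div_add_mod a K
        have h2 := Nat.div_add_mod b K
        have h3 := Nat.mod_lt b hK
        rw [hab] at h1
        rw [mem_Ico]; omega
      have h := hmin _ hm
      have e : (((b - a : ℕ) * α : ℝ) : UnitAddCircle)
          = (((b * α : ℝ) : UnitAddCircle) - x) - (((a * α : ℝ) : UnitAddCircle) - x) := by
        rw [sub_sub_sub_cancel_right, ← AddCircle.coe_sub, Nat.cast_sub hlt.le, sub_mul]
      rw [e] at h
      have := norm_sub_le (((b * α : ℝ) : UnitAddCircle) - x) (((a * α : ℝ) : UnitAddCircle) - x)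
      linarith
    intro a ha b hb hab
    simp only [coe_filter, mem_range, Set.mem_ofPred_eq] at ha hb
    exact le_antisymm (not_lt.1 (main b a hb.2 ha.2 hab.symm)) (not_lt.1 (main a b ha.2 hb.2 hab))

theorem meanZero_eFun_mul_of_continuousAt {α θ : ℝ} (hα : Irrational α)
    (hθ : ∀ k l : ℤ, θ + k * α ≠ l) {F : UnitAddCircle → ℂ} {C : ℝ} (hC : ∀ x, ‖F x‖ ≤ C)
    (D : Finset UnitAddCircle) (hF : ∀ x ∉ D, ContinuousAt F x) :
    MeanZero (fun n => eFun (n * θ) * F ((n * α : ℝ) : UnitAddCircle)) := by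
  have hC0 : 0 ≤ C := (norm_nonneg _).trans (hC 0)
  refine meanZero_of_approx fun η hη => ?_
  obtain ⟨K, hK⟩ := exists_nat_gt (2 * (C * #D) / η)
  have hK0 : (0 : ℝ) < K := lt_of_le_of_lt (by positivity) hK
  obtain ⟨ε, hε, hcard⟩ := exists_card_near_le hα (K := K) (by exact_mod_cast hK0)
  let χ : UnitAddCircle → ℝ := fun x => ∏ d ∈ D, min 1 (‖x - d‖ / ε)
  have hχ : Continuous χ := by fun_prop
  have hχ0 : ∀ x, 0 ≤ χ x := fun x => prod_nonneg fun d _ => by positivity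
  have hχ1 : ∀ x, χ x ≤ 1 := fun x =>
    prod_le_one (fun d _ => by positivity) fun d _ => min_le_left _ _
  have hG : Continuous (fun x => F x * (χ x : ℂ)) := by
    rw [continuous_iff_continuousAt]
    intro x
    by_cases hx : x ∈ D
    · have h0 : χ x = 0 := prod_eq_zero hx (by simp)
      rw [ContinuousAt, h0, Complex.ofReal_zero, mul_zero]
      refine isBoundedUnder_le_mul_tendsto_zero (isBoundedUnder_of ⟨C, hC⟩) ?_
      simpa [h0, Function.comp_def] using (Complex.continuous_ofReal.comp hχ).tendsto x
    · exact (hF x hx).mul (Complex.continuous_ofReal.comp hχ).continuousAt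
  refine ⟨_, meanZero_eFun_mul_continuous hθ ⟨_, hG⟩, ?_⟩
  have bound : ∀ x : UnitAddCircle, ‖F x - F x * (χ x : ℂ)‖
      ≤ ∑ d ∈ D, if ‖x - d‖ < ε then C else 0 := by
    intro x
    by_cases h : ∃ d ∈ D, ‖x - d‖ < ε
    · obtain ⟨d, hd, hxd⟩ := h
      have h1 : ‖F x - F x * (χ x : ℂ)‖ ≤ C := by
        have e : F x - F x * (χ x : ℂ) = F x * ((1 - χ x : ℝ) : ℂ) := by push_cast; ring
        rw [e, norm_mul, Complex.norm_real, Real.norm_of_nonneg (sub_nonneg.2 (hχ1 x))]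
        exact (mul_le_of_le_one_right (norm_nonneg _) (by linarith [hχ0 x])).trans (hC x)
      refine h1.trans ?_
      refine le_trans ?_ (single_le_sum (fun d _ => ?_) hd)
      · simp [hxd]
      · split_ifs <;> simp [hC0]
    · push Not at h
      have h1 : χ x = 1 := prod_eq_one fun d hd => by
        rw [min_eq_left]
        rw [le_div_iff₀ hε, one_mul]
        exact h d hd
      rw [h1]
      simp only [Complex.ofReal_one, mul_one, sub_self, norm_zero]
      exact sum_nonneg fun d _ => by split_ifs <;> simp [hC0]
  filter_upwards [(tendsto_natCast_atTop_atTop (R := ℝ)).eventually_ge_atTop K] with N hN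
  have hN0 : (0 : ℝ) < N := hK0.trans_le hN
  have hcount : ∀ d : UnitAddCircle, ∑ n ∈ range N,
      (if ‖((n * α : ℝ) : UnitAddCircle) - d‖ < ε then C else 0) ≤ (2 * N / K) * C := by
    intro d
    rw [← sum_filter, sum_const, nsmul_eq_mul]
    gcongr
    have h1 : ((N / K + 1 : ℕ) : ℝ) ≤ 2 * N / K := by
      push_cast
      have := Nat.cast_div_le (α := ℝ) (m := N) (n := K)
      have : 1 ≤ (N : ℝ) / K := by rwa [le_div_iff₀ hK0, one_mul]
      rw [mul_div_assoc]
      linarith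
    exact le_trans (by exact_mod_cast hcard d N) h1
  calc _ ≤ ∑ n ∈ range N, ∑ d ∈ D,
        (if ‖((n * α : ℝ) : UnitAddCircle) - d‖ < ε then C else 0) := sum_le_sum fun n _ => by
        rw [← mul_sub, norm_mul, norm_eFun, one_mul]
        exact bound _
    _ ≤ ∑ _d ∈ D, (2 * N / K) * C := by
        rw [sum_comm]
        exact sum_le_sum fun d _ => hcount d
    _ ≤ η * N := by
        rw [sum_const, nsmul_eq_mul]
        rw [div_lt_iff₀ hη] at hK
        have : (#D : ℝ) * (2 * N / K * C) = (2 * (C * #D)) * N / K := by ring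
        rw [this, div_le_iff₀ hK0]
        nlinarith

theorem exists_forall_shift_frequency_ne {α β : ℝ}
    (hind : ∀ a b c : ℚ, (a : ℝ) + (b : ℝ) * α + (c : ℝ) * β = 0 → a = 0 ∧ b = 0 ∧ c = 0)
    (γ : ℝ) : ∃ M : ℕ, ∀ h : ℕ, M ≤ h → ∀ m : ℤ, |h * α - m| ≤ 1 → ∀ k l : ℤ,
      m * β + h * γ + k * α ≠ l := by
  by_cases hrel : ∃ (h₁ : ℕ) (m₁ k₁ l₁ : ℤ), 0 < h₁ ∧ m₁ * β + h₁ * γ + k₁ * α = l₁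
  · obtain ⟨h₁, m₁, k₁, l₁, hpos, hrel⟩ := hrel
    have hne : 0 < |h₁ * α - m₁| := by
      rw [abs_pos]
      intro h0
      have := (hind (-m₁) h₁ 0 (by push_cast; linarith)).2.1
      exact hpos.ne' (by exact_mod_cast this)
    obtain ⟨M, hM⟩ := exists_nat_gt (h₁ / |h₁ * α - m₁|)
    refine ⟨M, fun h hh m hm k l heq => ?_⟩
    have h1 := (hind (h * l₁ - h₁ * l) (h₁ * k - h * k₁) (h₁ * m - h * m₁) (by
      push_cast
      linear_combination (h₁ : ℝ) * heq - h * hrel)).2.2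
    have h2 : (h₁ * m - h * m₁ : ℝ) = 0 := by exact_mod_cast h1
    have h3 : (h : ℝ) * |h₁ * α - m₁| ≤ h₁ := by
      have e : (h : ℝ) * (h₁ * α - m₁) = h₁ * (h * α - m) := by linear_combination h2
      calc (h : ℝ) * |h₁ * α - m₁| = |(h : ℝ) * (h₁ * α - m₁)| := by
            rw [abs_mul, Nat.abs_cast]
        _ = h₁ * |h * α - m| := by rw [e, abs_mul, Nat.abs_cast]
        _ ≤ h₁ := mul_le_of_le_one_right (Nat.cast_nonneg _) hm
    rw [div_lt_iff₀ hne] at hM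
    have : (M : ℝ) ≤ h := by exact_mod_cast hh
    nlinarith
  · refine ⟨1, fun h hh m _ k l heq => hrel ⟨h, m, k, l, hh, heq⟩⟩

/-- The fractional part as a function on the circle. -/
noncomputable def circleFract (x : UnitAddCircle) : ℝ := AddCircle.equivIco 1 0 x

theorem circleFract_coe (x : ℝ) : circleFract (x : UnitAddCircle) = Int.fract x := by
  rw [circleFract, AddCircle.coe_equivIco_mk_apply, div_one, mul_one]

theorem continuousAt_circleFract {x : UnitAddCircle} (hx : x ≠ 0) :
    ContinuousAt circleFract x :=
  continuous_subtype_val.continuousAt.comp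
    (AddCircle.continuousAt_equivIco (p := (1 : ℝ)) (a := 0) (by simpa using hx))

/-- The carry `{x} + {y} - {x + y}` of the addition of fractional parts. -/
noncomputable def carry (y x : UnitAddCircle) : ℝ :=
  circleFract x + circleFract y - circleFract (x + y)

theorem carry_coe (x y : ℝ) :
    carry (y : UnitAddCircle) (x : UnitAddCircle) = ⌊x + y⌋ - ⌊x⌋ - ⌊y⌋ := by
  rw [carry, ← AddCircle.coe_add, circleFract_coe, circleFract_coe, circleFract_coe]
  simp only [Int.fract]
  ring

theorem floor_add_eq_or (x y : ℝ) : ⌊x + y⌋ = ⌊x⌋ + ⌊y⌋ ∨ ⌊x + y⌋ = ⌊x⌋ + ⌊y⌋ + 1 := by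
  have := Int.le_floor_add x y
  have := Int.le_floor_add_floor x y
  omega

theorem carry_eq_zero_or_one (y x : UnitAddCircle) : carry y x = 0 ∨ carry y x = 1 := by
  induction x using QuotientAddGroup.induction_on with | _ x
  induction y using QuotientAddGroup.induction_on with | _ y
  rw [carry_coe]
  rcases floor_add_eq_or x y with h | h <;> rw [h] <;> push_cast
  · left; ring
  · right; ring

theorem continuousAt_carry {x y : UnitAddCircle} (hx : x ≠ 0) (hxy : x ≠ -y) :
    ContinuousAt (carry y) x := by
  have h : ContinuousAt (fun z => circleFract (z + y)) x :=
    ContinuousAt.comp (g := circleFract) (f := fun z => z + y)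
      (continuousAt_circleFract fun h => hxy (eq_neg_of_add_eq_zero_left h)) (by fun_prop)
  exact ((continuousAt_circleFract hx).add continuousAt_const).sub h

theorem meanZero_eFun_mul_carry {α θ : ℝ} (hα : Irrational α)
    (hθ : ∀ k l : ℤ, θ + k * α ≠ l) (g : ℝ → ℝ) (hg : Continuous g)
    (hg1 : ∀ t, t = 0 ∨ t = 1 → |g t| ≤ 1) (y : UnitAddCircle) (s : ℝ) :
    MeanZero (fun n => eFun (n * θ) * ((g (carry y ((n * α : ℝ) : UnitAddCircle)) : ℂ) *
      eFun (s * Int.fract (n * α)))) := by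
  classical
  have := meanZero_eFun_mul_of_continuousAt hα hθ
    (F := fun x => (g (carry y x) : ℂ) * eFun (s * circleFract x)) (C := 1)
    (fun x => by
      rw [norm_mul, norm_eFun, mul_one, Complex.norm_real]
      exact hg1 _ (carry_eq_zero_or_one y x)) {0, -y}
    (fun x hx => by
      simp only [Finset.mem_insert, Finset.mem_singleton, not_or] at hx
      refine ContinuousAt.mul ?_ ?_
      · exact (Complex.continuous_ofReal.comp hg).continuousAt.comp
          (continuousAt_carry hx.1 hx.2)
      · exact (continuous_eFun.comp (continuous_const_mul s)).continuousAt.comp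
          (continuousAt_circleFract hx.1))
  simpa only [circleFract_coe] using this

theorem eval_eq_of_natDegree_le_two {p : Polynomial ℝ} (hp : p.natDegree ≤ 2) (x : ℝ) :
    p.eval x = p.coeff 2 * x ^ 2 + p.coeff 1 * x + p.coeff 0 := by
  rw [Polynomial.eval_eq_sum_range' (Nat.lt_succ_of_le hp)]
  simp [sum_range_succ]
  ring

theorem eFun_correlation (α β a b c : ℝ) (n h : ℕ) :
    eFun ((⌊((n + h : ℕ) : ℝ) * α⌋ : ℝ) * ((n + h : ℕ) : ℝ) * β +
        (a * ((n + h : ℕ) : ℝ) ^ 2 + b * ((n + h : ℕ) : ℝ) + c)) *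
      conj (eFun ((⌊(n : ℝ) * α⌋ : ℝ) * (n : ℝ) * β + (a * (n : ℝ) ^ 2 + b * (n : ℝ) + c))) =
    eFun (⌊h * α⌋ * h * β + a * h ^ 2 + b * h) *
      (eFun (n * ((⌊h * α⌋ : ℤ) * β + h * (α * β + 2 * a))) *
        (((1 - carry ((h * α : ℝ) : UnitAddCircle) ((n * α : ℝ) : UnitAddCircle) : ℝ) : ℂ) *
          eFun (-h * β * Int.fract (n * α)))) +
    eFun ((⌊h * α⌋ + 1) * h * β + a * h ^ 2 + b * h) *
      (eFun (n * ((⌊h * α⌋ + 1 : ℤ) * β + h * (α * β + 2 * a))) *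
        ((carry ((h * α : ℝ) : UnitAddCircle) ((n * α : ℝ) : UnitAddCircle) : ℂ) *
          eFun (-h * β * Int.fract (n * α)))) := by
  have e : ((n + h : ℕ) : ℝ) * α = n * α + h * α := by push_cast; ring
  rw [carry_coe, conj_eFun, ← eFun_add, e]
  rcases floor_add_eq_or (n * α) (h * α) with h1 | h1
  · have hc : (⌊(n : ℝ) * α + h * α⌋ : ℝ) - ⌊(n : ℝ) * α⌋ - ⌊(h : ℝ) * α⌋ = 0 := by
      rw [h1]; push_cast; ring
    rw [hc, h1]
    simp only [sub_zero, Complex.ofReal_one, Complex.ofReal_zero, one_mul, zero_mul, mul_zero,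
      add_zero, ← eFun_add, Int.fract]
    congr 1
    push_cast
    ring
  · have hc : (⌊(n : ℝ) * α + h * α⌋ : ℝ) - ⌊(n : ℝ) * α⌋ - ⌊(h : ℝ) * α⌋ = 1 := by
      rw [h1]; push_cast; ring
    rw [hc, h1]
    simp only [sub_self, Complex.ofReal_one, Complex.ofReal_zero, one_mul, zero_mul, mul_zero,
      zero_add, ← eFun_add, Int.fract]
    congr 1
    push_cast
    ring

theorem statement18 (α β : ℝ)
    (hind : ∀ a b c : ℚ, (a : ℝ) + (b : ℝ) * α + (c : ℝ) * β = 0 →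
      a = 0 ∧ b = 0 ∧ c = 0)
    (p : Polynomial ℝ) (hp : p.natDegree ≤ 2) :
    Tendsto (fun N : ℕ => (N : ℂ)⁻¹ * ∑ n ∈ Finset.Icc 1 N,
        eFun ((⌊(n : ℝ) * α⌋ : ℝ) * (n : ℝ) * β + p.eval (n : ℝ)))
      atTop (nhds 0) := by
  have hα : Irrational α := by
    rintro ⟨q, hq⟩
    have := (hind (-q) 1 0 (by push_cast; linarith)).2.1
    exact one_ne_zero this
  set u : ℕ → ℂ := fun n => eFun ((⌊(n : ℝ) * α⌋ : ℝ) * (n : ℝ) * β + p.eval (n : ℝ)) with hu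
  have hu1 : ∀ n, ‖u n‖ ≤ 1 := fun n => (norm_eFun _).le
  have hmean : MeanZero u := by
    obtain ⟨M, hM⟩ := exists_forall_shift_frequency_ne hind (α * β + 2 * p.coeff 2)
    refine meanZero_of_correlations hu1 M fun h hh => ?_
    have hfl := Int.floor_le ((h : ℝ) * α)
    have hlt := Int.lt_floor_add_one ((h : ℝ) * α)
    simp only [hu, eval_eq_of_natDegree_le_two hp, eFun_correlation]
    refine MeanZero.add (MeanZero.const_mul ?_ _) (MeanZero.const_mul ?_ _)
    · refine meanZero_eFun_mul_carry hα (hM h hh _ ?_) (fun t => 1 - t) (by fun_prop) ?_ _ _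
      · rw [abs_le]; constructor <;> linarith
      · rintro t (rfl | rfl) <;> simp
    · refine meanZero_eFun_mul_carry hα (hM h hh _ ?_) (fun t => t) continuous_id ?_ _ _
      · push_cast
        rw [abs_le]; constructor <;> linarith
      · rintro t (rfl | rfl) <;> simp
  have hshift := hmean.shift hu1 1
  unfold MeanZero at hshift
  convert hshift using 3 with N
  rw [range_eq_Ico, sum_Ico_add' u 0 N 1, zero_add, ← Finset.Ico_succ_right_eq_Icc]
  rfl
end

section
/- Let Λ be a set of integers. Then there exist a system (X,ℬ,μ,T) and a set A ∈ ℬ with μ(A) = d̄(Λ) such that for every ℓ ∈ ℕ and all integers n₁,…,n_ℓ, one has d̄(Λ ∩ (Λ−n₁) ∩ … ∩ (Λ−n_ℓ)) ≥ μ(A ∩ T^{-n₁}A ∩ … ∩ T^{-n_ℓ}A). -/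
open Filter MeasureTheory

/-- The upper (Banach) density of a set of integers:
`limsup_{N→∞} |Λ ∩ {-N,…,N}| / (2N+1)`. -/
noncomputable def upperDensity (Λ : Set ℤ) : ℝ :=
  letI := Classical.decPred fun x : ℤ => x ∈ Λ
  limsup (fun N : ℕ =>
    (((Finset.Icc (-(N : ℤ)) (N : ℤ)).filter fun x => x ∈ Λ).card : ℝ) / (2 * N + 1))
    atTop

open scoped Topology ENNReal

/-- The proportion of the interval `{-N, …, N}` occupied by `Λ`. -/
noncomputable def intervalDensity (Λ : Set ℤ) (N : ℕ) : ℝ :=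
  letI := Classical.decPred fun x : ℤ => x ∈ Λ
  (((Finset.Icc (-(N : ℤ)) (N : ℤ)).filter fun x => x ∈ Λ).card : ℝ) / (2 * N + 1)

theorem card_Icc_neg_self (N : ℕ) : (Finset.Icc (-(N : ℤ)) (N : ℤ)).card = 2 * N + 1 := by
  rw [Int.card_Icc]
  lia

theorem intervalDensity_nonneg (Λ : Set ℤ) (N : ℕ) : 0 ≤ intervalDensity Λ N := by
  unfold intervalDensity
  positivity

theorem intervalDensity_le_one (Λ : Set ℤ) (N : ℕ) : intervalDensity Λ N ≤ 1 := by
  classical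
  unfold intervalDensity
  rw [div_le_one (by positivity)]
  have h := (Finset.card_filter_le (Finset.Icc (-(N : ℤ)) (N : ℤ)) (· ∈ Λ)).trans_eq
    (card_Icc_neg_self N)
  convert (Nat.cast_le (α := ℝ)).2 h
  push_cast
  rfl

/-- The upper density is the greatest cluster point of the interval densities. -/
theorem isGreatest_mapClusterPt_upperDensity (Λ : Set ℤ) :
    IsGreatest {a : ℝ | MapClusterPt a atTop (intervalDensity Λ)} (upperDensity Λ) :=
  isGreatest_mapClusterPt_limsup
    (isBoundedUnder_of ⟨0, intervalDensity_nonneg Λ⟩).isCoboundedUnder_le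
    (isBoundedUnder_of ⟨1, intervalDensity_le_one Λ⟩)

/-- The uniform probability measure on the points `p x` with `|x| ≤ N`. -/
noncomputable def empiricalMeasure {X : Type*} [MeasurableSpace X] (p : ℤ → X) (N : ℕ) :
    Measure X :=
  ((2 * N + 1 : ℕ) : ℝ≥0∞)⁻¹ • ∑ x ∈ Finset.Icc (-(N : ℤ)) (N : ℤ), Measure.dirac (p x)

section Empirical

variable {X : Type*} [MeasurableSpace X]

instance isProbabilityMeasure_empiricalMeasure (p : ℤ → X) (N : ℕ) :
    IsProbabilityMeasure (empiricalMeasure p N) := by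
  constructor
  simp only [empiricalMeasure, Measure.smul_apply, Measure.finsetSum_apply, measure_univ,
    Finset.sum_const, card_Icc_neg_self, smul_eq_mul, nsmul_eq_mul, mul_one]
  exact ENNReal.inv_mul_cancel (by simp) (ENNReal.natCast_ne_top _)

/-- The empirical measure, bundled as a probability measure. -/
noncomputable def empiricalProbability (p : ℤ → X) (N : ℕ) : ProbabilityMeasure X :=
  ⟨empiricalMeasure p N, inferInstance⟩

theorem empiricalMeasure_apply (p : ℤ → X) (N : ℕ) {s : Set X} (hs : MeasurableSet s) :
    empiricalMeasure p N s = ENNReal.ofReal (intervalDensity (p ⁻¹' s) N) := by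
  classical
  have h : ∑ x ∈ Finset.Icc (-(N : ℤ)) (N : ℤ), Measure.dirac (p x) s =
      (((Finset.Icc (-(N : ℤ)) (N : ℤ)).filter (· ∈ p ⁻¹' s)).card : ℝ≥0∞) := by
    simp [hs, Set.indicator_apply]
  rw [empiricalMeasure, Measure.smul_apply, Measure.finsetSum_apply, h, intervalDensity,
    ENNReal.ofReal_div_of_pos (by positivity), ENNReal.ofReal_natCast, smul_eq_mul, mul_comm,
    ← div_eq_mul_inv]
  congr
  rw [← ENNReal.ofReal_natCast]
  push_cast
  rfl

theorem integral_empiricalMeasure [TopologicalSpace X] [OpensMeasurableSpace X] (p : ℤ → X)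
    (N : ℕ) (f : BoundedContinuousFunction X ℝ) :
    ∫ a, f a ∂empiricalMeasure p N =
      (∑ x ∈ Finset.Icc (-(N : ℤ)) (N : ℤ), f (p x)) / (2 * N + 1) := by
  rw [empiricalMeasure, integral_smul_measure,
    integral_finsetSum_measure fun _ _ ↦ f.integrable _]
  simp only [integral_dirac' _ _ f.continuous.stronglyMeasurable]
  rw [ENNReal.toReal_inv, ENNReal.toReal_natCast, smul_eq_mul, div_eq_inv_mul]
  push_cast
  rfl

end Empirical

theorem sum_Icc_neg_self_shift_sub (g : ℤ → ℝ) (N : ℕ) :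
    ∑ x ∈ Finset.Icc (-(N : ℤ)) (N : ℤ), g (x + 1) - ∑ x ∈ Finset.Icc (-(N : ℤ)) (N : ℤ), g x =
      g (N + 1) - g (-N) := by
  have h : ∀ n : ℕ, ∀ a : ℤ, ∑ x ∈ Finset.Ico a (a + n), (g (x + 1) - g x) = g (a + n) - g a := by
    intro n a
    induction n with
    | zero => simp
    | succ k ih =>
      have : Finset.Ico a (a + (k + 1 : ℕ)) = insert (a + k) (Finset.Ico a (a + k)) := by
        ext x
        simp only [Finset.mem_Ico, Finset.mem_insert]
        lia
      rw [this, Finset.sum_insert (by simp), ih]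
      push_cast
      rw [← add_assoc]
      ring
  have hsum := h (2 * N + 1) (-N)
  rw [← Finset.sum_sub_distrib]
  have e : (-(N : ℤ)) + ((2 * N + 1 : ℕ) : ℤ) = N + 1 := by push_cast; ring
  rw [e] at hsum
  rw [← hsum]
  congr 1

/-- The empirical averages of a bounded function along an orbit are asymptotically invariant. -/
theorem tendsto_integral_empiricalMeasure_comp_sub {X : Type*} [TopologicalSpace X]
    [MeasurableSpace X] [OpensMeasurableSpace X] {T : C(X, X)} {p : ℤ → X}
    (hp : ∀ x, T (p x) = p (x + 1)) (f : BoundedContinuousFunction X ℝ) :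
    Tendsto (fun N ↦ ∫ a, f.compContinuous T a ∂empiricalMeasure p N -
      ∫ a, f a ∂empiricalMeasure p N) atTop (𝓝 0) := by
  have hlim : Tendsto (fun N : ℕ ↦ 2 * ‖f‖ / (2 * (N : ℝ) + 1)) atTop (𝓝 0) := by
    refine Tendsto.const_div_atTop ?_ _
    exact tendsto_atTop_add_const_right _ _
      (tendsto_natCast_atTop_atTop.const_mul_atTop (by norm_num))
  refine squeeze_zero_norm (fun N ↦ ?_) hlim
  rw [integral_empiricalMeasure, integral_empiricalMeasure, ← sub_div]
  simp only [BoundedContinuousFunction.compContinuous_apply, hp]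
  rw [sum_Icc_neg_self_shift_sub (fun x ↦ f (p x)), norm_div,
    Real.norm_of_nonneg (by positivity : (0 : ℝ) ≤ 2 * N + 1)]
  gcongr
  exact (dist_eq_norm _ _).symm.trans_le (f.dist_le_two_norm _ _)

/-- A weak limit of empirical measures along an orbit of `T` is invariant under `T`. -/
theorem measurePreserving_of_tendsto_empiricalMeasure {X : Type*} [TopologicalSpace X]
    [MeasurableSpace X] [BorelSpace X] [HasOuterApproxClosed X] {T : C(X, X)} {p : ℤ → X}
    (hp : ∀ x, T (p x) = p (x + 1)) {F : Filter ℕ} [F.NeBot] (hF : F ≤ atTop)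
    {μ : ProbabilityMeasure X}
    (hμ : Tendsto (empiricalProbability p) F (𝓝 μ)) :
    MeasurePreserving T (μ : Measure X) μ := by
  refine ⟨T.continuous.measurable, ?_⟩
  have : IsProbabilityMeasure ((μ : Measure X).map T) :=
    Measure.isProbabilityMeasure_map T.continuous.aemeasurable
  refine ext_of_forall_integral_eq_of_IsFiniteMeasure fun f ↦ ?_
  rw [integral_map T.continuous.aemeasurable f.continuous.aestronglyMeasurable]
  have h := ProbabilityMeasure.tendsto_iff_forall_integral_tendsto.1 hμ
  exact sub_eq_zero.1 (tendsto_nhds_unique ((h (f.compContinuous T)).sub (h f))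
    ((tendsto_integral_empiricalMeasure_comp_sub hp f).mono_left hF))

/-- The shift on two-sided sequences of booleans. -/
def boolShift : (ℤ → Bool) ≃ₜ (ℤ → Bool) where
  toFun ω n := ω (n + 1)
  invFun ω n := ω (n - 1)
  left_inv ω := by simp
  right_inv ω := by simp
  continuous_toFun := by fun_prop
  continuous_invFun := by fun_prop

theorem boolShift_zpow_apply (m : ℤ) (ω : ℤ → Bool) (n : ℤ) :
    (boolShift.toMeasurableEquiv.toEquiv ^ m) ω n = ω (n + m) := by
  induction m generalizing ω with
  | zero => simp
  | succ k ih =>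
    rw [zpow_add_one, Equiv.Perm.mul_apply, ih]
    change ω (n + k + 1) = _
    rw [add_assoc]
  | pred k ih =>
    rw [zpow_sub_one, Equiv.Perm.mul_apply, ih]
    change ω (n + -k - 1) = _
    rw [add_sub_assoc]

/-- Furstenberg's correspondence principle (Bergelson's formulation). -/
theorem statement19 (Λ : Set ℤ) :
    ∃ (X : Type) (_ : MeasurableSpace X) (μ : Measure X) (T : X ≃ᵐ X) (A : Set X),
      IsProbabilityMeasure μ ∧ MeasurePreserving (⇑T) μ μ ∧ MeasurableSet A ∧
      μ A = ENNReal.ofReal (upperDensity Λ) ∧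
      ∀ (ℓ : ℕ) (n : Fin ℓ → ℤ),
        μ (A ∩ ⋂ i, (⇑(T.toEquiv ^ (n i))) ⁻¹' A) ≤
          ENNReal.ofReal (upperDensity (Λ ∩ ⋂ i, {x : ℤ | x + n i ∈ Λ})) := by
  classical
  let p : ℤ → ℤ → Bool := fun x n ↦ decide (n + x ∈ Λ)
  have hp (x : ℤ) : (boolShift : C(ℤ → Bool, ℤ → Bool)) (p x) = p (x + 1) := by
    funext n
    change decide (n + 1 + x ∈ Λ) = decide (n + (x + 1) ∈ Λ)
    rw [add_assoc, add_comm 1 x]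
  obtain ⟨F, hF, hFd⟩ := mapClusterPt_iff_ultrafilter.1 (isGreatest_mapClusterPt_upperDensity Λ).1
  obtain ⟨μ, -, hμ⟩ := isCompact_univ.ultrafilter_le_nhds
    (F.map (empiricalProbability p)) (by simp)
  replace hμ : Tendsto (empiricalProbability p) F (𝓝 μ) := hμ
  have hlim {C : Set (ℤ → Bool)} (hC : IsClopen C) :
      Tendsto (fun N ↦ ENNReal.ofReal (intervalDensity (p ⁻¹' C) N)) F
        (𝓝 ((μ : Measure (ℤ → Bool)) C)) := by
    refine (ProbabilityMeasure.tendsto_measure_of_null_frontier_of_tendsto' hμ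
      (by simp [hC.frontier_eq])).congr fun N ↦ ?_
    exact empiricalMeasure_apply p N hC.isOpen.measurableSet
  have hA (m : ℤ) : IsClopen {ω : ℤ → Bool | ω m = true} :=
    (isClopen_discrete {true}).preimage (continuous_apply m)
  refine ⟨ℤ → Bool, inferInstance, μ, boolShift.toMeasurableEquiv, {ω | ω 0 = true}, inferInstance,
    measurePreserving_of_tendsto_empiricalMeasure hp hF hμ, (hA 0).isOpen.measurableSet, ?_, ?_⟩
  · refine tendsto_nhds_unique (hlim (hA 0)) ?_
    have : p ⁻¹' {ω | ω 0 = true} = Λ := by ext; simp [p]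
    rw [this]
    exact (ENNReal.continuous_ofReal.tendsto _).comp hFd
  · intro ℓ n
    set C : Set (ℤ → Bool) := {ω | ω 0 = true} ∩
      ⋂ i, (⇑(boolShift.toMeasurableEquiv.toEquiv ^ (n i))) ⁻¹' {ω | ω 0 = true} with hC
    have hCeq : C = {ω | ω 0 = true} ∩ ⋂ i, {ω | ω (n i) = true} := by
      ext ω
      simp [hC, boolShift_zpow_apply]
    have hclopen : IsClopen C := hCeq ▸ (hA 0).inter (isClopen_iInter_of_finite fun i ↦ hA (n i))
    have hpre : p ⁻¹' C = Λ ∩ ⋂ i, {x : ℤ | x + n i ∈ Λ} := by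
      ext x
      simp [hCeq, p, add_comm]
    rw [← hpre]
    obtain ⟨a, -, ha⟩ := (isCompact_Icc (a := (0 : ℝ)) (b := 1)).ultrafilter_le_nhds
      (F.map (intervalDensity (p ⁻¹' C))) (le_principal_iff.2 <| mem_map.2 <| univ_mem' fun N ↦
        ⟨intervalDensity_nonneg _ N, intervalDensity_le_one _ N⟩)
    replace ha : Tendsto (intervalDensity (p ⁻¹' C)) F (𝓝 a) := ha
    rw [tendsto_nhds_unique (hlim hclopen) ((ENNReal.continuous_ofReal.tendsto a).comp ha)]
    exact ENNReal.ofReal_le_ofReal ((isGreatest_mapClusterPt_upperDensity _).2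
      (mapClusterPt_iff_ultrafilter.2 ⟨F, hF, ha⟩))
end
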